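/- Every complete metric tree is centered: if T is a complete metric tree (complete geodesic metric space satisfying the four-point inequality), then for every bounded subset U ⊆ T there exists z ∈ T such that U ⊆ closedBall(z, diam(U)/2), i.e., d(u,z) ≤ diam(U)/2 for all u ∈ U. -/

import Mathlib

/-!
Let `D = diam U`. If `x, y ∈ U` are at distance at least `D - ε` and `m` is a midpoint of `x, y`,
the four-point inequality for `u, m, x, y` shows that `U` lies in the closed ball of radius
`D / 2 + ε / 2` about `m`, so every radius larger than `D / 2` admits a center. Applied to two
centers `z, w` and two points of `U` that nearly realize the diameter, the same inequality shows
that centers for the radii `r, s` are at distance at most `r + s - D`. Hence centers for radii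
decreasing to `D / 2` form a Cauchy sequence, and its limit is a center for the radius `D / 2`.
-/

open Filter Metric Set Topology

/-- Dress's four-point inequality (0-hyperbolicity): among the three ways of splitting four points
into two pairs, the largest sum of distances is attained at least twice. Quantifying over all
quadruples makes it enough to bound one of the three sums by the maximum of the other two. -/
def FourPointInequality (T : Type*) [PseudoMetricSpace T] : Prop :=
  ∀ x₁ x₂ x₃ x₄ : T, dist x₁ x₂ + dist x₃ x₄ ≤
    max (dist x₁ x₃ + dist x₂ x₄) (dist x₁ x₄ + dist x₂ x₃)

/-- `m` is a metric midpoint of `x` and `y`; unlike Mathlib's `midpoint`, this needs no affine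
structure, and `m` need not be unique. -/
def IsMetricMidpoint {T : Type*} [PseudoMetricSpace T] (x y m : T) : Prop :=
  dist m x = dist x y / 2 ∧ dist m y = dist x y / 2

section

variable {T : Type*} [PseudoMetricSpace T] {U : Set T} {x y z w m : T} {r s : ℝ}

lemma isMetricMidpoint_of_geodesic {γ : ℝ → T} (hγ_zero : γ 0 = x)
    (hγ_dist : γ (dist x y) = y)
    (hγ : ∀ s ∈ Icc 0 (dist x y), ∀ t ∈ Icc 0 (dist x y), dist (γ s) (γ t) = |s - t|) :
    IsMetricMidpoint x y (γ (dist x y / 2)) := by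
  have hd : 0 ≤ dist x y := dist_nonneg
  have half_mem : dist x y / 2 ∈ Icc 0 (dist x y) := ⟨div_nonneg hd zero_le_two, half_le_self hd⟩
  constructor
  · calc dist (γ (dist x y / 2)) x = dist (γ (dist x y / 2)) (γ 0) := by rw [hγ_zero]
      _ = |dist x y / 2 - 0| := hγ _ half_mem _ (left_mem_Icc.2 hd)
      _ = dist x y / 2 := by rw [sub_zero, abs_of_nonneg half_mem.1]
  · calc dist (γ (dist x y / 2)) y = dist (γ (dist x y / 2)) (γ (dist x y)) := by rw [hγ_dist]
      _ = |dist x y / 2 - dist x y| := hγ _ half_mem _ (right_mem_Icc.2 hd)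
      _ = dist x y / 2 := by rw [abs_sub_comm, sub_half, abs_of_nonneg half_mem.1]

lemma exists_lt_dist_of_lt_diam (hU : U.Nonempty) (hr : r < diam U) :
    ∃ x ∈ U, ∃ y ∈ U, r < dist x y := by
  contrapose! hr
  exact diam_le_of_forall_dist_le_of_nonempty hU hr

namespace FourPointInequality

lemma dist_add_diam_le (h : FourPointInequality T) (hU : U.Nonempty)
    (hz : U ⊆ closedBall z r) (hw : U ⊆ closedBall w s) : dist z w + diam U ≤ r + s := by
  suffices diam U ≤ r + s - dist z w by linarith
  refine diam_le_of_forall_dist_le_of_nonempty hU fun x hx y hy ↦ ?_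
  have hfour : dist z w + dist x y ≤ r + s :=
    (h z w x y).trans <| max_le
      (add_le_add (mem_closedBall'.1 (hz hx)) (mem_closedBall'.1 (hw hy)))
      (add_le_add (mem_closedBall'.1 (hz hy)) (mem_closedBall'.1 (hw hx)))
  linarith

lemma subset_closedBall_of_isMetricMidpoint (h : FourPointInequality T)
    (hU : Bornology.IsBounded U) (hx : x ∈ U) (hy : y ∈ U) (hm : IsMetricMidpoint x y m) :
    U ⊆ closedBall m (diam U - dist x y / 2) := by
  intro u hu
  have hfour : dist u m + dist x y ≤ diam U + dist x y / 2 :=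
    (h u m x y).trans <| max_le
      (add_le_add (dist_le_diam_of_mem hU hu hx) hm.2.le)
      (add_le_add (dist_le_diam_of_mem hU hu hy) hm.1.le)
  rw [mem_closedBall]
  linarith

lemma exists_subset_closedBall_of_half_diam_lt (h : FourPointInequality T)
    (hU : Bornology.IsBounded U) (hne : U.Nonempty)
    (hmid : ∀ x ∈ U, ∀ y ∈ U, ∃ m, IsMetricMidpoint x y m) (hr : diam U / 2 < r) :
    ∃ z, U ⊆ closedBall z r := by
  obtain ⟨x, hx, y, hy, hxy⟩ : ∃ x ∈ U, ∃ y ∈ U, 2 * (diam U - r) < dist x y :=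
    exists_lt_dist_of_lt_diam hne (by linarith)
  obtain ⟨m, hm⟩ := hmid x hx y hy
  exact ⟨m, (h.subset_closedBall_of_isMetricMidpoint hU hx hy hm).trans
    (closedBall_subset_closedBall (by linarith))⟩

lemma cauchySeq_of_subset_closedBall (h : FourPointInequality T) (hU : U.Nonempty)
    {z : ℕ → T} {r : ℕ → ℝ} (hr : Antitone r) (hr_lim : Tendsto r atTop (𝓝 (diam U / 2)))
    (hz : ∀ n, U ⊆ closedBall (z n) (r n)) : CauchySeq z := by
  have hbound : Tendsto (fun N ↦ 2 * r N - diam U) atTop (𝓝 0) := by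
    simpa [mul_div_cancel₀] using (hr_lim.const_mul 2).sub_const (diam U)
  refine cauchySeq_of_le_tendsto_0 _ (fun n k N hn hk ↦ ?_) hbound
  linarith [h.dist_add_diam_le hU (hz n) (hz k), hr hn, hr hk]

lemma exists_subset_closedBall_half_diam [CompleteSpace T] (h : FourPointInequality T)
    (hU : U.Nonempty) (hcenter : ∀ r > diam U / 2, ∃ z, U ⊆ closedBall z r) :
    ∃ z, U ⊆ closedBall z (diam U / 2) := by
  obtain ⟨r, hr, hr_gt, hr_lim⟩ := exists_seq_strictAnti_tendsto (diam U / 2)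
  choose z hz using fun n ↦ hcenter (r n) (hr_gt n)
  obtain ⟨c, hc⟩ := cauchySeq_tendsto_of_complete
    (h.cauchySeq_of_subset_closedBall hU hr.antitone hr_lim hz)
  exact ⟨c, fun u hu ↦
    le_of_tendsto_of_tendsto' (tendsto_const_nhds.dist hc) hr_lim fun n ↦ hz n hu⟩

end FourPointInequality

theorem complete_metric_tree_centered_general [CompleteSpace T] [Nonempty T]
    (hfour : FourPointInequality T) (hU : Bornology.IsBounded U)
    (hmid : ∀ x ∈ U, ∀ y ∈ U, ∃ m, IsMetricMidpoint x y m) :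
    ∃ z, U ⊆ closedBall z (diam U / 2) := by
  rcases U.eq_empty_or_nonempty with rfl | hne
  · exact ⟨Classical.arbitrary T, empty_subset _⟩
  · exact hfour.exists_subset_closedBall_half_diam hne fun _ hr ↦
      hfour.exists_subset_closedBall_of_half_diam_lt hU hne hmid hr

end

/-- Every complete metric tree (complete geodesic metric space
satisfying the four-point inequality) is centered: every bounded subset `U` is contained
in a closed ball of radius `diam(U)/2` centered at some point of the tree. -/
theorem complete_metric_tree_centered {T : Type*} [MetricSpace T] [CompleteSpace T] [Nonempty T]
    (hgeo : ∀ x y : T, ∃ γ : ℝ → T, γ 0 = x ∧ γ (dist x y) = y ∧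
      ∀ s ∈ Set.Icc (0 : ℝ) (dist x y), ∀ t ∈ Set.Icc (0 : ℝ) (dist x y),
        dist (γ s) (γ t) = |s - t|)
    (hfour : ∀ x₁ x₂ x₃ x₄ : T, dist x₁ x₂ + dist x₃ x₄ ≤
      max (dist x₁ x₃ + dist x₂ x₄) (dist x₁ x₄ + dist x₂ x₃))
    (U : Set T) (hU : Bornology.IsBounded U) :
    ∃ z : T, ∀ u ∈ U, dist u z ≤ Metric.diam U / 2 := by
  exact complete_metric_tree_centered_general hfour hU fun x _ y _ ↦
    let ⟨_, hγ_zero, hγ_dist, hγ⟩ := hgeo x y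
    ⟨_, isMetricMidpoint_of_geodesic hγ_zero hγ_dist hγ⟩
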